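/- arXiv:2207.09826 — 3 statements merged into one kernel-verified Lean document; each statement's English description precedes it below -/
import Mathlib

section
/- Let G be a simple graph on the grid vertex set V = Fin m × Fin n. (i) If the signless Laplacian Q(G), regarded as a complex matrix, is separable, and there exists a vector v : V → ℝ with v(u) ∈ {−1, 1} for every u ∈ V and Q(G^Γ)·v = 0, then D(G) = D(G^Γ). (ii) Likewise for the signed Laplacian: if L(G), regarded as a complex matrix, is separable, and there exists v : V → ℝ with all entries in {−1, 1} and L(G^Γ)·v = 0, then D(G) = D(G^Γ). -/
open Matrix

-- Adjacency matrix of a simple graph, with real entries.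
open scoped Classical in
noncomputable def adjM {V : Type*} [Fintype V] (G : SimpleGraph V) : Matrix V V ℝ :=
  Matrix.of fun u v => if G.Adj u v then 1 else 0

-- Degree matrix of a simple graph: diagonal, with the vertex degrees on the diagonal.
open scoped Classical in
noncomputable def degM {V : Type*} [Fintype V] [DecidableEq V] (G : SimpleGraph V) :
    Matrix V V ℝ :=
  Matrix.diagonal fun v => ∑ u, if G.Adj v u then (1 : ℝ) else 0

/-- Signed Laplacian `L = D - A`. -/
noncomputable def lapL {V : Type*} [Fintype V] [DecidableEq V] (G : SimpleGraph V) :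
    Matrix V V ℝ :=
  degM G - adjM G

/-- Signless Laplacian `Q = D + A`. -/
noncomputable def lapQ {V : Type*} [Fintype V] [DecidableEq V] (G : SimpleGraph V) :
    Matrix V V ℝ :=
  degM G + adjM G

/-- Partial transpose graph: `(i,j) ~ (k,l)` iff `(i,l) ~ (k,j)` in `G`. -/
def ptGraph {m n : ℕ} (G : SimpleGraph (Fin m × Fin n)) : SimpleGraph (Fin m × Fin n) where
  Adj p q := G.Adj (p.1, q.2) (q.1, p.2)
  symm := ⟨fun _ _ h => G.symm.symm _ _ h⟩
  loopless := ⟨fun p h => G.loopless.irrefl p h⟩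

/-- Separability of a `V × V` complex matrix, `V = Fin m × Fin n`. -/
def MatrixIsSeparable {m n : ℕ} (ρ : Matrix (Fin m × Fin n) (Fin m × Fin n) ℂ) : Prop :=
  ∃ (T : Finset ℕ) (x : ℕ → Fin m → ℂ) (y : ℕ → Fin n → ℂ),
    ∀ (i k : Fin m) (j l : Fin n),
      ρ (i, j) (k, l) = ∑ t ∈ T, x t i * star (x t k) * (y t j * star (y t l))

open scoped Classical in
lemma sum_deg_pt {m n : ℕ} (G : SimpleGraph (Fin m × Fin n)) :
    ∑ p, ((∑ u, if G.Adj p u then (1 : ℝ) else 0) -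
      ∑ u, if (ptGraph G).Adj p u then (1 : ℝ) else 0) = 0 := by
  rw [Finset.sum_sub_distrib, sub_eq_zero]
  let f : Fin m × Fin n → Fin m × Fin n → ℝ := fun p q => if G.Adj p q then 1 else 0
  change ∑ p, ∑ u, f p u = ∑ p : Fin m × Fin n, ∑ u : Fin m × Fin n, f (p.1, u.2) (u.1, p.2)
  generalize f = f
  simp only [Fintype.sum_prod_type]
  refine Finset.sum_congr rfl fun i _ => ?_
  have h1 : ∀ j : Fin n, (∑ k : Fin m, ∑ l : Fin n, f (i, j) (k, l))
      = ∑ l : Fin n, ∑ k : Fin m, f (i, j) (k, l) := fun j => Finset.sum_comm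
  have h2 : ∀ j : Fin n, (∑ k : Fin m, ∑ l : Fin n, f (i, l) (k, j))
      = ∑ l : Fin n, ∑ k : Fin m, f (i, l) (k, j) := fun j => Finset.sum_comm
  rw [Finset.sum_congr rfl fun j _ => h1 j, Finset.sum_congr rfl fun j _ => h2 j]
  exact Finset.sum_comm

open scoped Classical in
lemma degree_aux {m n : ℕ} (G : SimpleGraph (Fin m × Fin n)) (s : ℝ)
    (hs : MatrixIsSeparable ((degM G + s • adjM G).map fun a => (a : ℂ)))
    (v : Fin m × Fin n → ℝ) (hv : ∀ u, v u = 1 ∨ v u = -1)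
    (hk : (degM (ptGraph G) + s • adjM (ptGraph G)).mulVec v = 0) :
    degM G = degM (ptGraph G) := by
  obtain ⟨T, x, y, h⟩ := hs
  set d : Fin m × Fin n → ℝ := fun p => ∑ u, if G.Adj p u then (1 : ℝ) else 0 with hd
  set d' : Fin m × Fin n → ℝ :=
    fun p => ∑ u, if (ptGraph G).Adj p u then (1 : ℝ) else 0 with hd'
  have hD : degM G = Matrix.diagonal d := rfl
  have hD' : degM (ptGraph G) = Matrix.diagonal d' := rfl
  have hsum : ∑ p, (d p - d' p) = 0 := sum_deg_pt G
  let z : ℕ → Fin m × Fin n → ℂ := fun t p => x t p.1 * star (y t p.2)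
  have hN : ∀ p q, (((degM G + s • adjM (ptGraph G)) p q : ℝ) : ℂ)
      = ∑ t ∈ T, z t p * star (z t q) := by
    rintro ⟨i, j⟩ ⟨k, l⟩
    have h0 := h i k l j
    have e : (degM G + s • adjM (ptGraph G)) (i, j) (k, l)
        = (degM G + s • adjM G) (i, l) (k, j) := by
      simp only [hD, Matrix.add_apply, Matrix.smul_apply, Matrix.diagonal_apply, adjM,
        Matrix.of_apply, ptGraph, Prod.mk.injEq]
      congr 1
      by_cases hik : i = k
      · by_cases hjl : j = l
        · simp [hik, hjl]
        · simp [hjl, Ne.symm hjl]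
      · simp [hik]
    rw [e]
    rw [Matrix.map_apply] at h0
    rw [h0]
    refine Finset.sum_congr rfl fun t _ => ?_
    simp only [z, star_mul', star_star]
    ring
  have hNv : ∀ p, ∑ q, (degM G + s • adjM (ptGraph G)) p q * v q = (d p - d' p) * v p := by
    intro p
    have h1 : (degM G + s • adjM (ptGraph G)).mulVec v
        = (Matrix.diagonal d).mulVec v - (Matrix.diagonal d').mulVec v := by
      have h2 := hk
      rw [Matrix.add_mulVec, hD'] at h2
      rw [Matrix.add_mulVec, hD, eq_neg_of_add_eq_zero_right h2, sub_eq_add_neg]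
    have h3 := congrFun h1 p
    rw [Pi.sub_apply, Matrix.mulVec_diagonal, Matrix.mulVec_diagonal] at h3
    rw [sub_mul, ← h3]
    rfl
  let c : ℕ → ℂ := fun t => ∑ q, star (z t q) * (v q : ℂ)
  have hNc : ∀ p, (((d p - d' p) * v p : ℝ) : ℂ) = ∑ t ∈ T, z t p * c t := by
    intro p
    rw [← hNv p]
    rw [Complex.ofReal_sum]
    simp only [Complex.ofReal_mul, hN, c, Finset.sum_mul, Finset.mul_sum]
    rw [Finset.sum_comm]
    simp only [mul_assoc]
  have hv2 : ∀ p, v p * v p = 1 := by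
    intro p
    rcases hv p with h | h <;> simp [h]
  have hq : ∑ t ∈ T, Complex.normSq (c t) = 0 := by
    have : ((∑ t ∈ T, Complex.normSq (c t) : ℝ) : ℂ)
        = ((∑ p, v p * ((d p - d' p) * v p) : ℝ) : ℂ) := by
      rw [Complex.ofReal_sum, Complex.ofReal_sum]
      simp only [Complex.ofReal_mul (v _), hNc, Finset.mul_sum]
      rw [Finset.sum_comm]
      refine Finset.sum_congr rfl fun t _ => ?_
      rw [← Complex.mul_conj, mul_comm]
      simp only [← mul_assoc, ← Finset.sum_mul]
      congr 1
      simp [c, map_sum, mul_comm]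
    have h2 := Complex.ofReal_injective this
    rw [h2, ← hsum]
    refine Finset.sum_congr rfl fun p _ => ?_
    linear_combination (d p - d' p) * hv2 p
  have hc : ∀ t ∈ T, c t = 0 := by
    intro t ht
    exact Complex.normSq_eq_zero.1
      ((Finset.sum_eq_zero_iff_of_nonneg fun t _ => Complex.normSq_nonneg (c t)).1 hq t ht)
  rw [hD, hD']
  congr 1
  funext p
  have h0 : (d p - d' p) * v p = 0 := by
    apply Complex.ofReal_injective
    rw [hNc p, Finset.sum_eq_zero fun t ht => by rw [hc t ht, mul_zero]]
    simp
  linear_combination v p * h0 - (d p - d' p) * hv2 p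

/-- If the (signless resp. signed) Laplacian of a grid-labelled graph is separable and the
Laplacian of the partial transpose graph annihilates a `±1` vector, then the degree matrices
of the graph and of its partial transpose coincide. -/
theorem degree_criterion_applicability (m n : ℕ) (G : SimpleGraph (Fin m × Fin n)) :
    ((MatrixIsSeparable ((lapQ G).map fun a => (a : ℂ)) →
        (∃ v : Fin m × Fin n → ℝ, (∀ u, v u = 1 ∨ v u = -1) ∧
          (lapQ (ptGraph G)).mulVec v = 0) →
        degM G = degM (ptGraph G)) ∧
     (MatrixIsSeparable ((lapL G).map fun a => (a : ℂ)) →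
        (∃ v : Fin m × Fin n → ℝ, (∀ u, v u = 1 ∨ v u = -1) ∧
          (lapL (ptGraph G)).mulVec v = 0) →
        degM G = degM (ptGraph G))) := by
  refine ⟨?_, ?_⟩
  · rintro hs ⟨v, hv, hk⟩
    have e : ∀ H : SimpleGraph (Fin m × Fin n), lapQ H = degM H + (1 : ℝ) • adjM H := by
      intro H
      rw [one_smul]
      rfl
    rw [e] at hs hk
    exact degree_aux G 1 hs v hv hk
  · rintro hs ⟨v, hv, hk⟩
    have e : ∀ H : SimpleGraph (Fin m × Fin n), lapL H = degM H + (-1 : ℝ) • adjM H := by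
      intro H
      rw [neg_one_smul, ← sub_eq_add_neg]
      rfl
    rw [e] at hs hk
    exact degree_aux G (-1) hs v hv hk
end

section
/- Degree criterion for Q-graphs: let G be a simple graph on the grid vertex set V = Fin m × Fin n. If the signless Laplacian Q(G), regarded as a complex matrix, is separable, and the partial transpose graph G^Γ is bipartite, then D(G) = D(G^Γ). -/
open Matrix

/-- A simple graph is bipartite if it admits a proper 2-coloring. -/
def IsBipartite {V : Type*} (G : SimpleGraph V) : Prop :=
  ∃ c : V → Bool, ∀ u v, G.Adj u v → c u ≠ c v

theorem aux_psd_kernel {V : Type*} [Fintype V] (T : Finset ℕ) (z : ℕ → V → ℂ)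
    (M : V → V → ℝ) (hM : ∀ p q, (M p q : ℂ) = ∑ t ∈ T, z t p * star (z t q))
    (s : V → ℝ) (h0 : ∑ p, s p * ∑ q, M p q * s q = 0) (p : V) :
    ∑ q, M p q * s q = 0 := by
  set w : ℕ → ℂ := fun t => ∑ p, (s p : ℂ) * z t p with hw
  have hsw : ∀ t, star (w t) = ∑ q, (s q : ℂ) * star (z t q) := by
    intro t
    simp [hw, star_sum]
  have hrow : ∀ p, ((∑ q, M p q * s q : ℝ) : ℂ) = ∑ t ∈ T, z t p * star (w t) := by
    intro p
    push_cast
    simp_rw [hM, hsw, Finset.sum_mul, Finset.mul_sum]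
    rw [Finset.sum_comm]
    refine Finset.sum_congr rfl fun t _ => Finset.sum_congr rfl fun q _ => by ring
  have htot : ((∑ p, s p * ∑ q, M p q * s q : ℝ) : ℂ) = ((∑ t ∈ T, Complex.normSq (w t) : ℝ) : ℂ) := by
    rw [Complex.ofReal_sum, Complex.ofReal_sum]
    simp_rw [Complex.ofReal_mul _ (∑ q, _), hrow, Complex.normSq_eq_conj_mul_self, Finset.mul_sum]
    rw [Finset.sum_comm]
    refine Finset.sum_congr rfl fun t _ => ?_
    conv_rhs => rw [mul_comm]
    simp only [hw]
    rw [Finset.sum_mul]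
    refine Finset.sum_congr rfl fun q _ => ?_
    rw [← mul_assoc]; rfl
  rw [h0] at htot
  have h1 := (Complex.ofReal_injective htot).symm
  rw [Finset.sum_eq_zero_iff_of_nonneg (fun t _ => Complex.normSq_nonneg _)] at h1
  have h2 := hrow p
  have h3 : ∑ t ∈ T, z t p * star (w t) = 0 := Finset.sum_eq_zero (fun t ht => by
    rw [Complex.normSq_eq_zero.1 (h1 t ht)]; simp)
  rw [h3] at h2
  exact_mod_cast h2

/-- Degree criterion for `Q`-graphs: if `Q(G)` is separable and `G^Γ` is bipartite, then
`D(G) = D(G^Γ)`. -/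
theorem degree_criterion_Q (m n : ℕ) (G : SimpleGraph (Fin m × Fin n))
    (hsep : MatrixIsSeparable ((lapQ G).map fun a => (a : ℂ)))
    (hbip : IsBipartite (ptGraph G)) :
    degM G = degM (ptGraph G) := by
  classical
  obtain ⟨T, x, y, h⟩ := hsep
  obtain ⟨c, hc⟩ := hbip
  set s : Fin m × Fin n → ℝ := fun p => if c p then 1 else -1 with hs
  have hss : ∀ p, s p * s p = 1 := by
    intro p; simp only [hs]; split_ifs <;> norm_num
  set r : Fin m × Fin n → Fin m × Fin n → ℝ :=
    fun p q => if (ptGraph G).Adj p q then 1 else 0 with hr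
  set d : Fin m × Fin n → ℝ := fun v => ∑ u, if G.Adj v u then (1 : ℝ) else 0 with hd
  have hrs : ∀ p q, r p q * s q = - s p * r p q := by
    intro p q
    by_cases hpq : (ptGraph G).Adj p q
    · have := hc p q hpq
      simp only [hr, hs, hpq, if_true]
      cases hp : c p <;> cases hq : c q <;> simp_all
    · simp [hr, hpq]
  set M : Fin m × Fin n → Fin m × Fin n → ℝ :=
    fun p q => (if p = q then d p else 0) + r p q with hMdef
  have hrow : ∀ p, ∑ q, M p q * s q = s p * (d p - ∑ q, r p q) := by
    intro p
    simp only [hMdef, add_mul, Finset.sum_add_distrib, hrs, ← Finset.mul_sum]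
    simp
    ring
  have hsum : ∑ p, d p = ∑ p, ∑ q, r p q := by
    simp only [hd, hr, Fintype.sum_prod_type, ptGraph]
    refine Finset.sum_congr rfl fun i _ => ?_
    rw [Finset.sum_comm]
    conv_rhs => rw [Finset.sum_comm]
    refine Finset.sum_congr rfl fun k _ => ?_
    rw [Finset.sum_comm]
    refine Finset.sum_congr rfl fun a _ => Finset.sum_congr rfl fun b _ => ?_
    congr
  have key := aux_psd_kernel T (fun t p => x t p.1 * star (y t p.2)) M (by
    rintro ⟨i, j⟩ ⟨k, l⟩
    have h1 := h i k l j
    have h2 : ((lapQ G).map fun a => (a : ℂ)) (i, l) (k, j) = (M (i, j) (k, l) : ℂ) := by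
      simp only [Matrix.map_apply, lapQ, Matrix.add_apply, degM, adjM, Matrix.diagonal_apply,
        Matrix.of_apply, hMdef, hr, ptGraph, Prod.mk.injEq]
      by_cases hik : i = k <;> by_cases hjl : j = l
      · subst hik; subst hjl; simp [hd]
      · have hlj : ¬ l = j := fun h => hjl h.symm
        simp only [hjl, hlj, and_false, if_false]; congr
      · simp only [hik, false_and, if_false]; congr
      · simp only [hik, false_and, if_false]; congr
    rw [← h2, h1]
    refine Finset.sum_congr rfl fun t _ => ?_
    simp only [star_mul, star_star]
    ring) s (by
    simp only [hrow, ← mul_assoc, hss, one_mul, Finset.sum_sub_distrib, hsum, sub_self])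
  have hfin : ∀ p, d p = ∑ q, r p q := by
    intro p
    have h1 := key p
    rw [hrow] at h1
    have h2 : s p ≠ 0 := fun h0 => by simpa [h0] using hss p
    have := (mul_eq_zero.1 h1).resolve_left h2
    linarith
  unfold degM
  congr 1
  funext p
  simpa only [hd, hr] using hfin p
end

section
/- Let (S_l, S_q) be a hybrid graph on a finite vertex type V satisfying the COI condition with coloring c : V → Bool, and let U be the union graph on V (u adjacent to v in U iff u,v are adjacent in S_l or in S_q). For each connected component C of U define v_C : V → ℝ by v_C(u) = 1 if u ∈ C and c(u) = true, v_C(u) = −1 if u ∈ C and c(u) = false, and v_C(u) = 0 if u ∉ C. Then the family (v_C), indexed by the connected components of U, is a basis of the kernel {x : V → ℝ | (L(S_l) + Q(S_q))·x = 0} of the hybrid Laplacian, regarded as an ℝ-subspace of V → ℝ. -/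
open Matrix

/-- The two subgraphs of a hybrid graph have disjoint edge sets. -/
def EdgeDisjoint {V : Type*} (Sl Sq : SimpleGraph V) : Prop :=
  ∀ u v, ¬ (Sl.Adj u v ∧ Sq.Adj u v)

-- The vector associated to a connected component `C` of a graph `U` and a coloring `c`:
-- `1` on vertices of `C` colored `true`, `-1` on vertices of `C` colored `false`, `0` outside.
open scoped Classical in
noncomputable def compVec {V : Type*} (U : SimpleGraph V) (c : V → Bool)
    (C : U.ConnectedComponent) : V → ℝ :=
  fun u => if U.connectedComponentMk u = C then (if c u then 1 else -1) else 0

noncomputable def sgnC {V : Type*} (c : V → Bool) (u : V) : ℝ := if c u then 1 else -1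

theorem sgnC_sq {V : Type*} (c : V → Bool) (u : V) : sgnC c u * sgnC c u = 1 := by
  unfold sgnC; split_ifs <;> norm_num

open scoped Classical in
theorem hyb_mulVec {V : Type*} [Fintype V] [DecidableEq V]
    (Sl Sq : SimpleGraph V) (x : V → ℝ) (u : V) :
    ((lapL Sl + lapQ Sq) *ᵥ x) u = ∑ v, ((if Sl.Adj u v then x u - x v else 0)
      + (if Sq.Adj u v then x u + x v else 0)) := by
  rw [lapL, lapQ, degM, degM, Matrix.add_mulVec, Matrix.sub_mulVec, Matrix.add_mulVec]
  simp only [Pi.add_apply, Pi.sub_apply, Matrix.mulVec_diagonal]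
  simp only [Matrix.mulVec, dotProduct, adjM, Matrix.of_apply]
  rw [Finset.sum_mul, Finset.sum_mul, ← Finset.sum_sub_distrib, ← Finset.sum_add_distrib,
    ← Finset.sum_add_distrib]
  refine Finset.sum_congr rfl fun v _ => ?_
  split_ifs <;> ring

theorem lap_mulVec_sum {V : Type*} [Fintype V] [DecidableEq V]
    (G : SimpleGraph V) [DecidableRel G.Adj] (y : V → ℝ) (u : V) :
    (G.lapMatrix ℝ *ᵥ y) u = ∑ v, (if G.Adj u v then y u - y v else 0) := by
  rw [SimpleGraph.lapMatrix_mulVec_apply, ← Finset.sum_filter, Finset.sum_sub_distrib]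
  rw [← SimpleGraph.neighborFinset_eq_filter]
  simp

theorem hyb_ker_iff {V : Type*} [Fintype V] [DecidableEq V]
    (Sl Sq : SimpleGraph V) (hdisj : EdgeDisjoint Sl Sq) (c : V → Bool)
    (hq : ∀ u v, Sq.Adj u v → c u ≠ c v) (hl : ∀ u v, Sl.Adj u v → c u = c v) (x : V → ℝ) :
    x ∈ LinearMap.ker (lapL Sl + lapQ Sq).mulVecLin ↔
      ∀ u v, (Sl ⊔ Sq).Reachable u v → sgnC c u * x u = sgnC c v * x v := by
  classical
  have key : ∀ u, ((lapL Sl + lapQ Sq) *ᵥ x) u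
      = sgnC c u * ((Sl ⊔ Sq).lapMatrix ℝ *ᵥ (fun w => sgnC c w * x w)) u := by
    intro u
    rw [hyb_mulVec, lap_mulVec_sum, Finset.mul_sum]
    refine Finset.sum_congr rfl fun v _ => ?_
    have hs := sgnC_sq c u
    by_cases h1 : Sl.Adj u v
    · have h2 : ¬ Sq.Adj u v := fun h => hdisj u v ⟨h1, h⟩
      have h3 : sgnC c v = sgnC c u := by simp [sgnC, hl u v h1]
      simp only [SimpleGraph.sup_adj, h1, h2, if_true, if_false, true_or, h3]
      linear_combination (x v - x u) * hs
    · by_cases h2 : Sq.Adj u v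
      · have h3 : sgnC c v = - sgnC c u := by
          have := hq u v h2
          unfold sgnC
          cases hu : c u <;> cases hv : c v <;> simp_all
        simp only [SimpleGraph.sup_adj, h1, h2, if_true, if_false, or_true, h3]
        linear_combination (- x v - x u) * hs
      · simp [SimpleGraph.sup_adj, h1, h2]
  rw [LinearMap.mem_ker, Matrix.mulVecLin_apply,
    ← SimpleGraph.lapMatrix_mulVec_eq_zero_iff_forall_reachable (G := Sl ⊔ Sq)
      (x := fun w => sgnC c w * x w)]
  constructor
  · intro h
    funext u
    have h1 := key u
    rw [h] at h1
    have hs := sgnC_sq c u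
    rcases mul_eq_zero.1 h1.symm with h2 | h2
    · rw [h2] at hs; norm_num at hs
    · exact h2
  · intro h
    funext u
    rw [key u, h]; simp

theorem compVec_apply' {V : Type*} (U : SimpleGraph V) (c : V → Bool)
    (C : U.ConnectedComponent) (u : V) [Decidable (U.connectedComponentMk u = C)] :
    compVec U c C u = if U.connectedComponentMk u = C then sgnC c u else 0 := by
  unfold compVec sgnC
  congr

/-- For a COI hybrid graph `(S_l, S_q)` with coloring `c`, the family of component vectors of
the union graph `S_l ⊔ S_q` is a basis of the kernel of the hybrid Laplacian
`L(S_l) + Q(S_q)`. -/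
theorem hybrid_compVec_basis_of_kernel {V : Type*} [Fintype V] [DecidableEq V]
    (Sl Sq : SimpleGraph V) (hdisj : EdgeDisjoint Sl Sq) (c : V → Bool)
    (hq : ∀ u v, Sq.Adj u v → c u ≠ c v) (hl : ∀ u v, Sl.Adj u v → c u = c v) :
    (∀ C : (Sl ⊔ Sq).ConnectedComponent,
        compVec (Sl ⊔ Sq) c C ∈ LinearMap.ker (lapL Sl + lapQ Sq).mulVecLin) ∧
    ∃ b : Module.Basis (Sl ⊔ Sq).ConnectedComponent ℝ (LinearMap.ker (lapL Sl + lapQ Sq).mulVecLin),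
      ∀ C : (Sl ⊔ Sq).ConnectedComponent, (b C : V → ℝ) = compVec (Sl ⊔ Sq) c C := by
  classical
  have hmem : ∀ C : (Sl ⊔ Sq).ConnectedComponent,
        compVec (Sl ⊔ Sq) c C ∈ LinearMap.ker (lapL Sl + lapQ Sq).mulVecLin := by
    intro C
    rw [hyb_ker_iff Sl Sq hdisj c hq hl]
    intro u v h
    have h' : (Sl ⊔ Sq).connectedComponentMk u = (Sl ⊔ Sq).connectedComponentMk v :=
      SimpleGraph.ConnectedComponent.eq.2 h
    rw [compVec_apply', compVec_apply', h']
    split_ifs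
    · rw [sgnC_sq, sgnC_sq]
    · simp
  have hsum : ∀ (g : (Sl ⊔ Sq).ConnectedComponent → ℝ) (u : V),
      (∑ C, g C • compVec (Sl ⊔ Sq) c C) u = g ((Sl ⊔ Sq).connectedComponentMk u) * sgnC c u := by
    intro g u
    simp [Finset.sum_apply, compVec_apply']
  refine ⟨hmem, ?_⟩
  let f : (Sl ⊔ Sq).ConnectedComponent → LinearMap.ker (lapL Sl + lapQ Sq).mulVecLin :=
    fun C => ⟨compVec (Sl ⊔ Sq) c C, hmem C⟩
  have hcoe : ∀ g : (Sl ⊔ Sq).ConnectedComponent → ℝ,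
      ((∑ C, g C • f C : LinearMap.ker (lapL Sl + lapQ Sq).mulVecLin) : V → ℝ)
        = ∑ C, g C • compVec (Sl ⊔ Sq) c C := by
    intro g
    simp [f]
  have hli : LinearIndependent ℝ f := by
    rw [Fintype.linearIndependent_iff]
    intro g hg C
    induction C using SimpleGraph.ConnectedComponent.ind with
    | _ u =>
      have h1 := hsum g u
      rw [← hcoe, hg] at h1
      have hs := sgnC_sq c u
      rcases mul_eq_zero.1 h1.symm with h2 | h2
      · exact h2
      · rw [h2] at hs; norm_num at hs
  have hsp : ⊤ ≤ Submodule.span ℝ (Set.range f) := by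
    rintro x -
    have hx := (hyb_ker_iff Sl Sq hdisj c hq hl x).1 x.2
    rw [Submodule.mem_span_range_iff_exists_fun]
    refine ⟨fun C => sgnC c C.out * (x : V → ℝ) C.out, ?_⟩
    apply Subtype.ext
    rw [hcoe]
    funext u
    rw [hsum]
    have hr : (Sl ⊔ Sq).Reachable ((Sl ⊔ Sq).connectedComponentMk u).out u :=
      SimpleGraph.ConnectedComponent.exact (Quot.out_eq _)
    rw [hx _ _ hr]
    linear_combination (x : V → ℝ) u * sgnC_sq c u
  exact ⟨Module.Basis.mk hli hsp, fun C => by rw [Module.Basis.mk_apply]⟩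
end
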